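/- Let L : V → Ṽ be a symplectic linear map. Then there exists an orthonormal basis (a_1, …, a_{2n}) of V and positive reals λ_1, …, λ_{2n} such that: (i) a_{2k} = J a_{2k−1} for k = 1, …, n (so the matrix of J in this basis is block diagonal with 2×2 blocks [[0,−1],[1,0]]); (ii) each a_i is an eigenvector of L*L with L*L a_i = λ_i² a_i; and (iii) λ_{2k−1} λ_{2k} = 1 for k = 1, …, n. -/

import Mathlib

open scoped RealInnerProductSpace

/-!
Put `P = L*L`. The symplectic condition says `L* J' L = J`, and inverting it gives `L J L* = J'`;
together these yield `P J P = J`. Hence if `P v = μ v` then `P (J v) = μ⁻¹ J v`: the complex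
structure carries eigenvectors of `P` to eigenvectors with the inverse eigenvalue, and `J v ⟂ v`
because `J` is skew. The orthogonal complement of a span of such pairs `v, J v` is stable under the
symmetric operator `P`, so the spectral theorem produces a further eigenvector in it
(`exists_eigenvector_orthogonal`), and repeating this `n` times (`exists_symplectic_frame`)
exhausts `V`.
-/

section

variable {V : Type*} [NormedAddCommGroup V] [InnerProductSpace ℝ V]

/-- `J` is skew-adjoint, being orthogonal with square `-1`. -/
theorem inner_J_left {J : V →ₗ[ℝ] V} (hJ2 : ∀ v, J (J v) = -v)
    (hJorth : ∀ u v : V, ⟪J u, J v⟫ = ⟪u, v⟫) (u v : V) : ⟪J u, v⟫ = -⟪u, J v⟫ := by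
  rw [← hJorth u (J v), hJ2, inner_neg_right, neg_neg]

theorem inner_J_self {J : V →ₗ[ℝ] V} (hJ2 : ∀ v, J (J v) = -v)
    (hJorth : ∀ u v : V, ⟪J u, J v⟫ = ⟪u, v⟫) (v : V) : ⟪v, J v⟫ = 0 := by
  have h := inner_J_left hJ2 hJorth v v
  rw [real_inner_comm] at h
  linarith

theorem apply_J_of_eigenvector {J P : V →ₗ[ℝ] V} (hPJP : ∀ v, P (J (P v)) = J v)
    {v : V} {μ : ℝ} (hμ : μ ≠ 0) (hv : P v = μ • v) : P (J v) = μ⁻¹ • J v := by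
  have h := hPJP v
  rw [hv, map_smul, map_smul] at h
  exact (eq_inv_smul_iff₀ hμ).2 h

/-- A symmetric operator has a unit eigenvector orthogonal to any family of fewer than `dim V` of
its eigenvectors. -/
theorem exists_eigenvector_orthogonal [FiniteDimensional ℝ V] {P : V →ₗ[ℝ] V}
    (hP : P.IsSymmetric) {ι : Type*} [Fintype ι] (c : ι → V) (m : ι → ℝ)
    (hc : ∀ i, P (c i) = m i • c i) (hcard : Fintype.card ι < Module.finrank ℝ V) :
    ∃ (v : V) (μ : ℝ), ‖v‖ = 1 ∧ P v = μ • v ∧ ∀ i, ⟪c i, v⟫ = 0 := by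
  set S := Submodule.span ℝ (Set.range c) with hS
  have hSP : ∀ s ∈ S, P s ∈ S := by
    have : S ≤ S.comap P := by
      rw [hS, Submodule.span_le]
      rintro _ ⟨i, rfl⟩
      simp only [Submodule.comap_coe, Set.mem_preimage, SetLike.mem_coe, hc]
      exact Submodule.smul_mem _ _ (Submodule.subset_span ⟨i, rfl⟩)
    exact this
  have hinv : ∀ w ∈ Sᗮ, P w ∈ Sᗮ := by
    intro w hw
    rw [Submodule.mem_orthogonal] at hw ⊢
    intro s hs
    rw [← hP s w]
    exact hw _ (hSP s hs)
  have hrank : 0 < Module.finrank ℝ Sᗮ := by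
    have h1 := S.finrank_add_finrank_orthogonal
    have h2 : Module.finrank ℝ S ≤ Fintype.card ι := finrank_range_le_card c
    omega
  have hsym := hP.restrict_invariant hinv
  let B := hsym.eigenvectorBasis rfl
  let i₀ : Fin (Module.finrank ℝ Sᗮ) := ⟨0, hrank⟩
  refine ⟨B i₀, hsym.eigenvalues rfl i₀, ?_, ?_, fun i => ?_⟩
  · exact B.orthonormal.1 i₀
  · have h := congrArg Subtype.val (hsym.apply_eigenvectorBasis rfl i₀)
    exact h
  · exact (Submodule.mem_orthogonal _ _).1 (B i₀).2 _ (Submodule.subset_span ⟨i, rfl⟩)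

/-- Partial unitary frames of eigenvectors. Only the values of `b` and `l` below `k` matter;
indexing by `ℕ` lets the induction extend a frame with `Function.update`. -/
theorem exists_symplectic_frame [FiniteDimensional ℝ V] {n : ℕ}
    (hV : Module.finrank ℝ V = 2 * n) {J P : V →ₗ[ℝ] V}
    (hJ2 : ∀ v, J (J v) = -v) (hJorth : ∀ u v : V, ⟪J u, J v⟫ = ⟪u, v⟫)
    (hP : P.IsSymmetric) (hpos : ∀ v, v ≠ 0 → 0 < ⟪P v, v⟫)
    (hPJP : ∀ v, P (J (P v)) = J v) (k : ℕ) (hk : k ≤ n) :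
    ∃ (b : ℕ → V) (l : ℕ → ℝ),
      (∀ i < k, 0 < l i ∧ P (b i) = (l i ^ 2) • b i) ∧
      ∀ i < k, ∀ j < k, ⟪b i, b j⟫ = (if i = j then 1 else 0) ∧ ⟪b i, J (b j)⟫ = 0 := by
  induction k with
  | zero => exact ⟨0, 0, by simp, by simp⟩
  | succ k ih =>
    obtain ⟨b, l, hb, horth⟩ := ih (by omega)
    obtain ⟨v, μ, hv1, hvμ, hv⟩ := exists_eigenvector_orthogonal hP
      (Sum.elim (fun i : Fin k => b i) (fun i : Fin k => J (b i)))
      (Sum.elim (fun i : Fin k => l i ^ 2) (fun i : Fin k => (l i ^ 2)⁻¹))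
      (by
        rintro (i | i)
        · exact (hb i i.2).2
        · exact apply_J_of_eigenvector hPJP (pow_pos (hb i i.2).1 2).ne' (hb i i.2).2)
      (by simp; omega)
    have hvb : ∀ i < k, ⟪b i, v⟫ = 0 := fun i hi => hv (Sum.inl ⟨i, hi⟩)
    have hvJ : ∀ i < k, ⟪J (b i), v⟫ = 0 := fun i hi => hv (Sum.inr ⟨i, hi⟩)
    have hvv : ⟪v, v⟫ = (1 : ℝ) := by rw [real_inner_self_eq_norm_sq, hv1, one_pow]
    have hμ : 0 < μ := by
      have h := hpos v (by rintro rfl; simp at hv1)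
      rwa [hvμ, real_inner_smul_left, hvv, mul_one] at h
    refine ⟨Function.update b k v, Function.update l k √μ, fun i hi => ?_, fun i hi j hj => ?_⟩
    · rcases Nat.lt_succ_iff_lt_or_eq.1 hi with h | rfl
      · simpa [h.ne] using hb i h
      · simp [hμ, Real.sq_sqrt hμ.le, hvμ]
    · rcases Nat.lt_succ_iff_lt_or_eq.1 hi with h | rfl <;>
        rcases Nat.lt_succ_iff_lt_or_eq.1 hj with h' | rfl
      · simpa [h.ne, h'.ne] using horth i h j h'
      · have h2 := inner_J_left hJ2 hJorth (b i) v
        rw [hvJ i h] at h2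
        simp only [Function.update_self, Function.update_of_ne h.ne, if_neg h.ne]
        exact ⟨hvb i h, by linarith⟩
      · simp only [Function.update_self, Function.update_of_ne h'.ne, if_neg h'.ne']
        exact ⟨by rw [real_inner_comm]; exact hvb j h', by rw [real_inner_comm]; exact hvJ j h'⟩
      · simpa [hv1] using inner_J_self hJ2 hJorth v

end

/-- Singular value decomposition of a symplectic linear map: there is an
orthonormal basis `a_0, …, a_{2n-1}` of `V` (0-indexed) with `a_{2k+1} = J a_{2k}`,
consisting of eigenvectors of `L*L` with eigenvalues `λ_i²`, `λ_i > 0`, and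
`λ_{2k} λ_{2k+1} = 1` for each `k`. -/
theorem symplectic_singular_value_decomposition {n : ℕ} {V W : Type*}
    [NormedAddCommGroup V] [InnerProductSpace ℝ V] [FiniteDimensional ℝ V]
    [NormedAddCommGroup W] [InnerProductSpace ℝ W] [FiniteDimensional ℝ W]
    (hV : Module.finrank ℝ V = 2 * n) (hW : Module.finrank ℝ W = 2 * n)
    (J : V →ₗ[ℝ] V) (J' : W →ₗ[ℝ] W)
    (hJ2 : ∀ v, J (J v) = -v) (hJorth : ∀ u v : V, ⟪J u, J v⟫ = ⟪u, v⟫)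
    (hJ'2 : ∀ w, J' (J' w) = -w) (hJ'orth : ∀ u v : W, ⟪J' u, J' v⟫ = ⟪u, v⟫)
    (L : V →ₗ[ℝ] W) (hLbij : Function.Bijective L)
    (hL : ∀ u v : V, ⟪J u, v⟫ = ⟪J' (L u), L v⟫) :
    ∃ (a : Fin (2 * n) → V) (lam : Fin (2 * n) → ℝ),
      Orthonormal ℝ a ∧
      Submodule.span ℝ (Set.range a) = ⊤ ∧
      (∀ i, 0 < lam i) ∧
      (∀ k : Fin n, a ⟨2 * (k : ℕ) + 1, by have := k.isLt; omega⟩ =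
        J (a ⟨2 * (k : ℕ), by have := k.isLt; omega⟩)) ∧
      (∀ i, (LinearMap.adjoint L) (L (a i)) = ((lam i) ^ 2) • a i) ∧
      (∀ k : Fin n, lam ⟨2 * (k : ℕ), by have := k.isLt; omega⟩ *
        lam ⟨2 * (k : ℕ) + 1, by have := k.isLt; omega⟩ = 1) := by
  -- The two forms of the symplectic condition, `L* J' L = J` and `L J L* = J'`.
  have h1 : ∀ u, LinearMap.adjoint L (J' (L u)) = J u := fun u =>
    ext_inner_right ℝ fun v => by rw [LinearMap.adjoint_inner_left, hL]
  have h2 : ∀ w, L (J (LinearMap.adjoint L w)) = J' w := by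
    intro w
    -- Surjectivity of `J' ∘ L` allows `w = J' (L u)`.
    obtain ⟨u, hu⟩ := hLbij.2 (-J' w)
    have hw : w = J' (L u) := by rw [hu, map_neg, hJ'2, neg_neg]
    rw [hw, h1, hJ2, hJ'2, map_neg]
  set P : V →ₗ[ℝ] V := LinearMap.adjoint L ∘ₗ L with hPdef
  have hPapp : ∀ v, P v = LinearMap.adjoint L (L v) := fun v => rfl
  have hPJP : ∀ v, P (J (P v)) = J v := by
    intro v
    rw [hPapp, hPapp, h2, h1]
  have hP : P.IsSymmetric := by
    intro u v
    rw [hPapp, hPapp, LinearMap.adjoint_inner_left, LinearMap.adjoint_inner_right]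
  have hpos : ∀ v, v ≠ 0 → 0 < ⟪P v, v⟫ := by
    intro v hv
    rw [hPapp, LinearMap.adjoint_inner_left]
    exact real_inner_self_pos.2 fun h => hv (hLbij.1 (by rw [h, map_zero]))
  obtain ⟨b, l, hb, horth⟩ := exists_symplectic_frame hV hJ2 hJorth hP hpos hPJP n le_rfl
  let a : Fin (2 * n) → V := fun i =>
    if (i : ℕ) % 2 = 0 then b ((i : ℕ) / 2) else J (b ((i : ℕ) / 2))
  let lam : Fin (2 * n) → ℝ := fun i =>
    if (i : ℕ) % 2 = 0 then l ((i : ℕ) / 2) else (l ((i : ℕ) / 2))⁻¹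
  have hlt : ∀ i : Fin (2 * n), (i : ℕ) / 2 < n := fun i => by have := i.2; omega
  have ha : Orthonormal ℝ a := by
    rw [orthonormal_iff_ite]
    intro i j
    obtain ⟨h3, h4⟩ := horth _ (hlt i) _ (hlt j)
    have h5 := (horth _ (hlt j) _ (hlt i)).2
    rw [real_inner_comm] at h5
    by_cases hi : (i : ℕ) % 2 = 0 <;> by_cases hj : (j : ℕ) % 2 = 0 <;>
      simp only [a, hi, hj, if_true, if_false, hJorth, h3, h4, h5, Fin.ext_iff]
    · exact if_congr (by omega) rfl rfl
    · rw [if_neg (by omega)]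
    · rw [if_neg (by omega)]
    · exact if_congr (by omega) rfl rfl
  refine ⟨a, lam, ha, ?_, fun i => ?_, fun k => ?_, fun i => ?_, fun k => ?_⟩
  · exact ha.linearIndependent.span_eq_top_of_card_eq_finrank' (by simp [hV])
  · have h := (hb _ (hlt i)).1
    simp only [lam]
    split_ifs
    · exact h
    · exact inv_pos.2 h
  · have e : (2 * (k : ℕ) + 1) / 2 = k := by omega
    simp [a, e, Nat.add_mod]
  · obtain ⟨h, h'⟩ := hb _ (hlt i)
    rw [← hPapp]
    simp only [a, lam]
    split_ifs
    · exact h'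
    · rw [inv_pow]
      exact apply_J_of_eigenvector hPJP (pow_pos h 2).ne' h'
  · have e : (2 * (k : ℕ) + 1) / 2 = k := by omega
    simp [lam, e, Nat.add_mod, (hb k k.2).1.ne']
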